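/- arXiv:1805.06434 — 2 statements merged into one kernel-verified Lean document; each statement's English description precedes it below -/
import Mathlib

section
/- Let p ≥ 1, s ∈ (0,1), ps ≠ 1, α = (ps-1)/p, and fix x_d > 0. Then lim_{ε→0⁺} ∫_{{y_d > 0 : |y_d - x_d| > ε}} (y_d^α - x_d^α)|y_d^α - x_d^α|^{p-2} / |y_d - x_d|^{ps+1} dy_d = - x_d^{α(p-1) - ps} ∫_0^1 |t^α - 1|^p / |t-1|^{ps+1} dt, and the integral σ = ∫_0^1 |t^α-1|^p/|t-1|^{ps+1} dt is a finite positive number. -/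
open MeasureTheory Real Filter

/-!
After scaling, `x = 1`. Write `K t` for the integrand, with `w t = t ^ α`, and `h t` for the
integrand of `σ`, so that `K t * (w t - 1) = h t`. The kernel is antisymmetric and homogeneous, and
for `α = (p * s - 1) / p` this turns the substitution `t ↦ 1 / t` into
`t⁻² * K (1 / t) = -K t * w t = -(K t + h t)`. So the integral of `K` over `(1 + ε, ∞)` cancels the
one over `(0, 1 - ε)` up to `-∫ h` and the integral of `K` over the window `[1 - ε, 1 / (1 + ε))`.
The window has length `O(ε ^ 2)`, while `|K t| = O((1 - t) ^ (p - p * s - 2))` near `1`, so its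
contribution is `O(ε ^ (p - p * s))`.
-/

section PrincipalValue

open Set Topology

lemma inv_image_Ioo_inv {b : ℝ} (hb : 0 < b) : Inv.inv '' Ioo 0 b⁻¹ = Ioi b := by
  rw [image_inv_eq_inv, inv_Ioo_0_left (inv_pos.2 hb), inv_inv]

lemma hasDerivWithinAt_inv_Ioo {c x : ℝ} (hx : x ∈ Ioo 0 c) :
    HasDerivWithinAt (Inv.inv : ℝ → ℝ) (-(x ^ 2)⁻¹) (Ioo 0 c) x :=
  (hasDerivAt_inv hx.1.ne').hasDerivWithinAt

lemma abs_neg_inv_sq (u : ℝ) : |-(u ^ 2)⁻¹| = (u ^ 2)⁻¹ := by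
  rw [abs_neg, abs_of_nonneg (by positivity)]

lemma integrableOn_Ioi_iff_integrableOn_comp_inv {f : ℝ → ℝ} {b : ℝ} (hb : 0 < b) :
    IntegrableOn f (Ioi b) ↔ IntegrableOn (fun u => (u ^ 2)⁻¹ * f u⁻¹) (Ioo 0 b⁻¹) := by
  rw [← inv_image_Ioo_inv hb, integrableOn_image_iff_integrableOn_abs_deriv_smul measurableSet_Ioo
    (fun _ => hasDerivWithinAt_inv_Ioo) inv_injective.injOn]
  simp only [abs_neg_inv_sq, smul_eq_mul]

lemma setIntegral_Ioi_eq_setIntegral_comp_inv (f : ℝ → ℝ) {b : ℝ} (hb : 0 < b) :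
    ∫ t in Ioi b, f t = ∫ u in Ioo 0 b⁻¹, (u ^ 2)⁻¹ * f u⁻¹ := by
  rw [← inv_image_Ioo_inv hb, integral_image_eq_integral_abs_deriv_smul measurableSet_Ioo
    (fun _ => hasDerivWithinAt_inv_Ioo) inv_injective.injOn]
  simp only [abs_neg_inv_sq, smul_eq_mul]

lemma setOf_pos_and_lt_abs_sub_one {δ : ℝ} (hδ : 0 < δ) :
    {t : ℝ | 0 < t ∧ δ < |t - 1|} = Ioo 0 (1 - δ) ∪ Ioi (1 + δ) := by
  ext t
  simp only [mem_ofPred_eq, mem_union, mem_Ioo, mem_Ioi, lt_abs]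
  constructor
  · rintro ⟨ht, h | h⟩
    · exact Or.inr (by linarith)
    · exact Or.inl ⟨ht, by linarith⟩
  · rintro (⟨ht, h⟩ | h)
    · exact ⟨ht, Or.inr (by linarith)⟩
    · exact ⟨by linarith, Or.inl (by linarith)⟩

lemma inv_one_add_mem_Ioo {δ : ℝ} (hδ : 0 < δ) : (1 + δ)⁻¹ ∈ Ioo (0 : ℝ) 1 :=
  ⟨by positivity, inv_lt_one_of_one_lt₀ (by linarith)⟩

lemma one_sub_le_inv_one_add {δ : ℝ} (hδ : 0 < δ) : 1 - δ ≤ (1 + δ)⁻¹ := by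
  rw [← one_div, le_div_iff₀ (by linarith)]
  nlinarith

lemma setIntegral_lt_abs_sub_one_eq {f h : ℝ → ℝ} {δ : ℝ} (hδ : δ ∈ Ioo (0 : ℝ) 1)
    (hf : ∀ b < 1, IntegrableOn f (Ioo 0 b)) (hh : IntegrableOn h (Ioo 0 1))
    (hinv : ∀ u ∈ Ioo (0 : ℝ) 1, (u ^ 2)⁻¹ * f u⁻¹ = -(f u + h u)) :
    ∫ t in {t : ℝ | 0 < t ∧ δ < |t - 1|}, f t
      = -((∫ t in Ioo 0 (1 + δ)⁻¹, h t) + ∫ t in Ico (1 - δ) (1 + δ)⁻¹, f t) := by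
  have hpos : 0 < 1 + δ := by linarith [hδ.1]
  have hlt : (1 + δ)⁻¹ < 1 := (inv_one_add_mem_Ioo hδ.1).2
  have hsub : Ioo 0 (1 + δ)⁻¹ ⊆ Ioo (0 : ℝ) 1 := Ioo_subset_Ioo_right hlt.le
  have hcongr : EqOn (fun u => (u ^ 2)⁻¹ * f u⁻¹) (fun u => -(f u + h u)) (Ioo 0 (1 + δ)⁻¹) :=
    fun u hu => hinv u (hsub hu)
  have hf_Ioo : IntegrableOn f (Ioo 0 (1 + δ)⁻¹) := hf _ hlt
  have hf_Ico : IntegrableOn f (Ico (1 - δ) (1 + δ)⁻¹) :=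
    hf_Ioo.mono_set fun t ht => ⟨by linarith [ht.1, hδ.2], ht.2⟩
  have hh' : IntegrableOn h (Ioo 0 (1 + δ)⁻¹) := hh.mono_set hsub
  have hf_Ioi : IntegrableOn f (Ioi (1 + δ)) :=
    (integrableOn_Ioi_iff_integrableOn_comp_inv hpos).2
      ((integrableOn_congr_fun hcongr measurableSet_Ioo).2 (hf_Ioo.add hh').neg)
  have hright : ∫ t in Ioi (1 + δ), f t
      = -((∫ t in Ioo 0 (1 + δ)⁻¹, f t) + ∫ t in Ioo 0 (1 + δ)⁻¹, h t) := by
    rw [setIntegral_Ioi_eq_setIntegral_comp_inv f hpos,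
      setIntegral_congr_fun measurableSet_Ioo hcongr, integral_neg, integral_add hf_Ioo hh']
  have hleft : ∫ t in Ioo 0 (1 + δ)⁻¹, f t
      = (∫ t in Ioo 0 (1 - δ), f t) + ∫ t in Ico (1 - δ) (1 + δ)⁻¹, f t := by
    rw [← Ioo_union_Ico_eq_Ioo (sub_pos.2 hδ.2) (one_sub_le_inv_one_add hδ.1)]
    exact setIntegral_union (disjoint_left.2 fun t ht ht' => ht.2.not_ge ht'.1)
      measurableSet_Ico (hf _ (by linarith [hδ.1])) hf_Ico
  have hdisj : Disjoint (Ioo 0 (1 - δ)) (Ioi (1 + δ)) :=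
    disjoint_left.2 fun t ht ht' => by linarith [ht.2, mem_Ioi.1 ht', hδ.1]
  rw [setOf_pos_and_lt_abs_sub_one hδ.1, setIntegral_union hdisj measurableSet_Ioi
    (hf _ (by linarith [hδ.1])) hf_Ioi, hright, hleft]
  ring

lemma one_sub_rpow_le_of_mem_Ico {q δ t : ℝ} (hq : 0 ≤ q + 2) (hδ : δ ∈ Ioo (0 : ℝ) 1)
    (ht : t ∈ Ico (1 - δ) (1 + δ)⁻¹) : (1 - t) ^ q ≤ 4 * δ ^ (q + 2) / δ ^ 2 := by
  have hle : δ / 2 ≤ 1 - t := by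
    have hdiv : δ / 2 ≤ δ / (1 + δ) := by
      have := hδ.1
      gcongr
      linarith [hδ.2]
    have heq : δ / (1 + δ) = 1 - (1 + δ)⁻¹ := by
      have : 1 + δ ≠ 0 := by linarith [hδ.1]
      field_simp
      ring
    linarith [ht.2]
  have hδ0 : 0 < δ := hδ.1
  have hpos : 0 < 1 - t := by linarith
  calc (1 - t) ^ q = (1 - t) ^ (q + 2) / (1 - t) ^ 2 := by
        rw [← rpow_natCast, ← rpow_sub hpos]
        norm_num
    _ ≤ δ ^ (q + 2) / (δ / 2) ^ 2 := by
        gcongr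
        linarith [ht.1]
    _ = 4 * δ ^ (q + 2) / δ ^ 2 := by
        field_simp
        norm_num

lemma inv_one_add_sub_one_sub_le {δ : ℝ} (hδ : 0 < δ) : (1 + δ)⁻¹ - (1 - δ) ≤ δ ^ 2 := by
  have heq : (1 + δ)⁻¹ - (1 - δ) = δ ^ 2 / (1 + δ) := by
    field_simp
    ring
  rw [heq]
  exact div_le_self (sq_nonneg δ) (by linarith)

lemma tendsto_setIntegral_Ico_one_sub_inv_one_add {f : ℝ → ℝ} {M q : ℝ} (hq : -2 < q)
    (hf : ∀ t ∈ Ico (1 / 2 : ℝ) 1, |f t| ≤ M * (1 - t) ^ q) :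
    Tendsto (fun δ => ∫ t in Ico (1 - δ) (1 + δ)⁻¹, f t) (𝓝[>] 0) (𝓝 0) := by
  have hM : 0 ≤ M := nonneg_of_mul_nonneg_left
    ((abs_nonneg _).trans (hf (1 / 2) ⟨le_rfl, by norm_num⟩)) (rpow_pos_of_pos (by norm_num) q)
  have hbound : ∀ δ ∈ Ioo (0 : ℝ) (1 / 2),
      ‖∫ t in Ico (1 - δ) (1 + δ)⁻¹, f t‖ ≤ M * 4 * δ ^ (q + 2) := fun δ hδ => by
    have hδ0 : 0 < δ := hδ.1
    have hpt : ∀ t ∈ Ico (1 - δ) (1 + δ)⁻¹, ‖f t‖ ≤ M * (4 * δ ^ (q + 2) / δ ^ 2) := fun t ht =>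
      (hf t ⟨by linarith [ht.1, hδ.2], ht.2.trans (inv_one_add_mem_Ioo hδ0).2⟩).trans <|
        mul_le_mul_of_nonneg_left
          (one_sub_rpow_le_of_mem_Ico (by linarith) ⟨hδ0, by linarith [hδ.2]⟩ ht) hM
    calc ‖∫ t in Ico (1 - δ) (1 + δ)⁻¹, f t‖
        ≤ M * (4 * δ ^ (q + 2) / δ ^ 2) * volume.real (Ico (1 - δ) (1 + δ)⁻¹) :=
          norm_setIntegral_le_of_norm_le_const measure_Ico_lt_top hpt
      _ ≤ M * (4 * δ ^ (q + 2) / δ ^ 2) * δ ^ 2 := by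
          rw [volume_real_Ico_of_le (one_sub_le_inv_one_add hδ0)]
          gcongr
          exact inv_one_add_sub_one_sub_le hδ0
      _ = M * 4 * δ ^ (q + 2) := by field_simp
  have hlim : Tendsto (fun δ : ℝ => M * 4 * δ ^ (q + 2)) (𝓝[>] 0) (𝓝 0) := by
    have h := (tendsto_id.mono_left nhdsWithin_le_nhds : Tendsto id (𝓝[>] (0 : ℝ)) (𝓝 0)).rpow_const
      (p := q + 2) (Or.inr (by linarith))
    rw [zero_rpow (by linarith)] at h
    simpa using h.const_mul (M * 4)
  exact squeeze_zero_norm' (eventually_of_mem (Ioo_mem_nhdsGT (by norm_num)) hbound) hlim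

lemma tendsto_setIntegral_Ioo_right {ι : Type*} {l : Filter ι} {f : ℝ → ℝ} {A B : ℝ} {b : ι → ℝ}
    (hf : IntegrableOn f (Ioo A B)) (hb : ∀ᶠ i in l, b i ≤ B) (hl : Tendsto b l (𝓝 B)) :
    Tendsto (fun i => ∫ t in Ioo A (b i), f t) l (𝓝 (∫ t in Ioo A B, f t)) := by
  rcases lt_or_ge A B with hAB | hAB
  · have hf' : IntegrableOn f (Icc A B) := by rwa [integrableOn_Icc_iff_integrableOn_Ioo]
    have hcont := intervalIntegral.continuousOn_primitive hf' B (right_mem_Icc.2 hAB.le)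
    simp only [ContinuousWithinAt, integral_Ioc_eq_integral_Ioo] at hcont
    have hmem : ∀ᶠ i in l, b i ∈ Icc A B := (hl.eventually_const_le hAB).and hb
    exact hcont.comp (tendsto_nhdsWithin_iff.2 ⟨hl, hmem⟩)
  · refine tendsto_const_nhds.congr' (hb.mono fun i hi => ?_)
    simp only [Ioo_eq_empty hAB.not_gt, Ioo_eq_empty (hi.trans hAB).not_gt]

lemma tendsto_setIntegral_lt_abs_sub_one {f h : ℝ → ℝ} {M q : ℝ} (hq : -2 < q)
    (hf : ∀ b < 1, IntegrableOn f (Ioo 0 b)) (hh : IntegrableOn h (Ioo 0 1))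
    (hinv : ∀ u ∈ Ioo (0 : ℝ) 1, (u ^ 2)⁻¹ * f u⁻¹ = -(f u + h u))
    (hfM : ∀ t ∈ Ico (1 / 2 : ℝ) 1, |f t| ≤ M * (1 - t) ^ q) :
    Tendsto (fun δ => ∫ t in {t : ℝ | 0 < t ∧ δ < |t - 1|}, f t) (𝓝[>] 0)
      (𝓝 (-∫ t in Ioo 0 1, h t)) := by
  have hlim : Tendsto (fun δ : ℝ => (1 + δ)⁻¹) (𝓝[>] 0) (𝓝 1) := by
    have h0 : Tendsto (fun δ : ℝ => δ) (𝓝[>] 0) (𝓝 0) := nhdsWithin_le_nhds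
    simpa using (h0.const_add 1).inv₀ (by norm_num)
  have hmain := tendsto_setIntegral_Ioo_right hh
    (eventually_of_mem self_mem_nhdsWithin fun _ hδ => (inv_one_add_mem_Ioo hδ).2.le) hlim
  have hsum := (hmain.add (tendsto_setIntegral_Ico_one_sub_inv_one_add hq hfM)).neg
  rw [add_zero] at hsum
  refine hsum.congr' (eventually_of_mem (Ioo_mem_nhdsGT one_pos) fun δ hδ => ?_)
  exact (setIntegral_lt_abs_sub_one_eq hδ hf hh hinv).symm

open scoped Pointwise in
lemma setIntegral_lt_abs_sub_eq_mul (f : ℝ → ℝ) {x : ℝ} (hx : 0 < x) (ε : ℝ) :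
    ∫ y in {y : ℝ | 0 < y ∧ ε < |y - x|}, f y
      = x * ∫ t in {t : ℝ | 0 < t ∧ ε / x < |t - 1|}, f (x * t) := by
  have hset : x • {t : ℝ | 0 < t ∧ ε / x < |t - 1|} = {y : ℝ | 0 < y ∧ ε < |y - x|} := by
    ext y
    have hsub : x⁻¹ * y - 1 = x⁻¹ * (y - x) := by field_simp
    rw [mem_smul_set_iff_inv_smul_mem₀ hx.ne']
    simp only [mem_ofPred_eq, smul_eq_mul, hsub, abs_mul, abs_of_pos (inv_pos.2 hx),
      div_eq_inv_mul, mul_lt_mul_iff_right₀ (inv_pos.2 hx), mul_pos_iff_of_pos_left (inv_pos.2 hx)]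
  have hscale := Measure.setIntegral_comp_smul_of_pos volume f
    {t : ℝ | 0 < t ∧ ε / x < |t - 1|} hx
  simp only [hset, Module.finrank_self, pow_one, smul_eq_mul] at hscale
  rw [hscale, mul_inv_cancel_left₀ hx.ne']

end PrincipalValue

section Rpow

open Set

variable {a p r t : ℝ}

lemma abs_rpow_sub_one_eq (ht : t ∈ Ioo (0 : ℝ) 1) :
    |t ^ a - 1| = max 1 (t ^ a) * (1 - t ^ |a|) := by
  rcases le_total 0 a with ha | ha
  · have hle : t ^ a ≤ 1 := rpow_le_one ht.1.le ht.2.le ha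
    rw [max_eq_left hle, one_mul, abs_of_nonneg ha, abs_of_nonpos (sub_nonpos.2 hle), neg_sub]
  · have hle : 1 ≤ t ^ a := one_le_rpow_of_pos_of_le_one_of_nonpos ht.1 ht.2.le ha
    rw [max_eq_right hle, abs_of_nonpos ha, abs_of_nonneg (sub_nonneg.2 hle), mul_sub,
      ← rpow_add ht.1, add_neg_cancel, rpow_zero, mul_one]

lemma min_one_mul_one_sub_le_one_sub_rpow (ha : 0 ≤ a) (ht : t ∈ Ioo (0 : ℝ) 1) :
    min 1 a * (1 - t) ≤ 1 - t ^ a := by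
  rcases le_total a 1 with h | h
  · have hbern := rpow_one_add_le_one_add_mul_self (by linarith [ht.1] : -1 ≤ t - 1) ha h
    rw [add_sub_cancel] at hbern
    rw [min_eq_right h]
    linarith
  · have hpow : t ^ a ≤ t := by simpa using rpow_le_rpow_of_exponent_ge ht.1 ht.2.le h
    rw [min_eq_left h]
    linarith

lemma one_sub_rpow_le_max_one_mul_one_sub (ht : t ∈ Ioo (0 : ℝ) 1) :
    1 - t ^ a ≤ max 1 a * (1 - t) := by
  rcases le_total a 1 with h | h
  · have hpow : t ≤ t ^ a := by simpa using rpow_le_rpow_of_exponent_ge ht.1 ht.2.le h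
    rw [max_eq_left h]
    linarith
  · have hbern := one_add_mul_self_le_rpow_one_add (by linarith [ht.1] : -1 ≤ t - 1) h
    rw [add_sub_cancel] at hbern
    rw [max_eq_right h]
    linarith

lemma min_one_abs_mul_one_sub_le_abs_rpow_sub_one (ht : t ∈ Ioo (0 : ℝ) 1) :
    min 1 |a| * (1 - t) ≤ |t ^ a - 1| :=
  calc min 1 |a| * (1 - t) ≤ 1 - t ^ |a| := min_one_mul_one_sub_le_one_sub_rpow (abs_nonneg a) ht
    _ ≤ max 1 (t ^ a) * (1 - t ^ |a|) :=
        le_mul_of_one_le_left (sub_nonneg.2 (rpow_le_one ht.1.le ht.2.le (abs_nonneg a)))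
          (le_max_left _ _)
    _ = |t ^ a - 1| := (abs_rpow_sub_one_eq ht).symm

lemma abs_rpow_sub_one_rpow_le (hp : 0 ≤ p) (ht : t ∈ Ioo (0 : ℝ) 1) :
    |t ^ a - 1| ^ p ≤ max 1 |a| ^ p * (1 + t ^ (a * p)) * (1 - t) ^ p := by
  have ht0 : 0 ≤ t := ht.1.le
  have hsub : 0 ≤ 1 - t := sub_nonneg.2 ht.2.le
  calc |t ^ a - 1| ^ p = (max 1 (t ^ a) * (1 - t ^ |a|)) ^ p := by rw [abs_rpow_sub_one_eq ht]
    _ ≤ (max 1 (t ^ a) * (max 1 |a| * (1 - t))) ^ p := by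
        have : 0 ≤ 1 - t ^ |a| := sub_nonneg.2 (rpow_le_one ht0 ht.2.le (abs_nonneg a))
        gcongr
        exact one_sub_rpow_le_max_one_mul_one_sub ht
    _ = max 1 |a| ^ p * max 1 (t ^ (a * p)) * (1 - t) ^ p := by
        rw [mul_rpow (by positivity) (by positivity), mul_rpow (by positivity) hsub,
          rpow_max zero_le_one (rpow_nonneg ht0 a) hp, one_rpow, ← rpow_mul ht0]
        ring
    _ ≤ max 1 |a| ^ p * (1 + t ^ (a * p)) * (1 - t) ^ p := by
        gcongr
        exact max_le_add_of_nonneg zero_le_one (rpow_nonneg ht0 _)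

lemma integrableOn_rpow_mul_one_sub_rpow {a b : ℝ} (ha : -1 < a) (hb : -1 < b) :
    IntegrableOn (fun t : ℝ => t ^ a * (1 - t) ^ b) (Ioo 0 1) := by
  have hbeta := Complex.betaIntegral_convergent (u := ((a + 1 : ℝ) : ℂ)) (v := ((b + 1 : ℝ) : ℂ))
    (by rw [Complex.ofReal_re]; linarith) (by rw [Complex.ofReal_re]; linarith)
  rw [intervalIntegrable_iff_integrableOn_Ioo_of_le zero_le_one] at hbeta
  refine IntegrableOn.congr_fun hbeta.norm (fun t ht => ?_) measurableSet_Ioo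
  have hcast : 1 - (t : ℂ) = ((1 - t : ℝ) : ℂ) := by push_cast; rfl
  simp only [norm_mul]
  rw [hcast, Complex.norm_cpow_eq_rpow_re_of_pos ht.1,
    Complex.norm_cpow_eq_rpow_re_of_pos (sub_pos.2 ht.2)]
  simp

end Rpow

/-- The integrand `(w y - w x) |w y - w x| ^ (p - 2) / |y - x| ^ r` of the fractional `p`-Laplacian
of the ground state `w t = t ^ a` at `x`; the order `s` enters through `r = p * s + 1`. -/
noncomputable def groundKernel (p r a x y : ℝ) : ℝ :=
  (y ^ a - x ^ a) * |y ^ a - x ^ a| ^ (p - 2) / |y - x| ^ r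

/-- The integrand of the constant `σ` on `(0, 1)`; the order `s` enters through `r = p * s + 1`. -/
noncomputable def groundDensity (p r a t : ℝ) : ℝ :=
  |t ^ a - 1| ^ p / |t - 1| ^ r

section Ground

open Set Topology

variable {p r a t : ℝ}

lemma groundDensity_nonneg : 0 ≤ groundDensity p r a t := by
  unfold groundDensity
  positivity

lemma measurable_groundDensity : Measurable (groundDensity p r a) := by
  unfold groundDensity
  fun_prop

lemma groundDensity_le (hp : 0 ≤ p) (ht : t ∈ Ioo (0 : ℝ) 1) :
    groundDensity p r a t ≤ max 1 |a| ^ p * (1 + t ^ (a * p)) * (1 - t) ^ (p - r) := by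
  have hsub : 0 < 1 - t := sub_pos.2 ht.2
  rw [groundDensity, abs_sub_comm t 1, abs_of_pos hsub, rpow_sub hsub, ← mul_div_assoc]
  gcongr
  exact abs_rpow_sub_one_rpow_le hp ht

lemma integrableOn_groundDensity (hp : 0 ≤ p) (hap : -1 < a * p) (hrp : r < p + 1) :
    IntegrableOn (groundDensity p r a) (Ioo 0 1) := by
  have hdom : IntegrableOn (fun t : ℝ => max 1 |a| ^ p *
      (t ^ (0 : ℝ) * (1 - t) ^ (p - r) + t ^ (a * p) * (1 - t) ^ (p - r))) (Ioo 0 1) :=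
    ((integrableOn_rpow_mul_one_sub_rpow neg_one_lt_zero (by linarith)).add
      (integrableOn_rpow_mul_one_sub_rpow hap (by linarith))).const_mul _
  refine hdom.mono' measurable_groundDensity.aestronglyMeasurable ?_
  filter_upwards [ae_restrict_mem measurableSet_Ioo] with t ht
  rw [norm_of_nonneg groundDensity_nonneg, rpow_zero, ← add_mul, ← mul_assoc]
  exact groundDensity_le hp ht

lemma groundDensity_pos (ha : a ≠ 0) (ht : t ∈ Ioo (0 : ℝ) 1) : 0 < groundDensity p r a t := by
  have hpow : 0 < |t ^ a - 1| :=
    (mul_pos (lt_min one_pos (abs_pos.2 ha)) (sub_pos.2 ht.2)).trans_le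
      (min_one_abs_mul_one_sub_le_abs_rpow_sub_one ht)
  have hsub : 0 < |t - 1| := abs_pos.2 (sub_ne_zero.2 ht.2.ne)
  unfold groundDensity
  positivity

lemma setIntegral_groundDensity_pos (hp : 0 ≤ p) (ha : a ≠ 0) (hap : -1 < a * p)
    (hrp : r < p + 1) : 0 < ∫ t in Ioo 0 1, groundDensity p r a t := by
  rw [← integral_Ioc_eq_integral_Ioo, ← intervalIntegral.integral_of_le zero_le_one]
  exact intervalIntegral.intervalIntegral_pos_of_pos_on
    ((intervalIntegrable_iff_integrableOn_Ioo_of_le zero_le_one).2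
      (integrableOn_groundDensity hp hap hrp)) (fun _ ht => groundDensity_pos ha ht) one_pos

lemma measurable_groundKernel {x : ℝ} : Measurable (groundKernel p r a x) := by
  unfold groundKernel
  fun_prop

lemma groundKernel_swap (p r a x y : ℝ) : groundKernel p r a x y = -groundKernel p r a y x := by
  unfold groundKernel
  rw [abs_sub_comm (y ^ a), abs_sub_comm y, ← neg_sub (x ^ a), neg_mul, neg_div]

lemma groundKernel_mul_mul {c x y : ℝ} (hc : 0 < c) (hx : 0 ≤ x) (hy : 0 ≤ y) :
    groundKernel p r a (c * x) (c * y) = c ^ (a * (p - 1) - r) * groundKernel p r a x y := by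
  have hexp : a * (p - 1) = a + a * (p - 2) := by ring
  unfold groundKernel
  rw [mul_rpow hc.le hx, mul_rpow hc.le hy, ← mul_sub, ← mul_sub, abs_mul, abs_mul, abs_of_pos hc,
    abs_of_pos (rpow_pos_of_pos hc a), mul_rpow hc.le (abs_nonneg _),
    mul_rpow (rpow_nonneg hc.le a) (abs_nonneg _), ← rpow_mul hc.le, rpow_sub hc, hexp, rpow_add hc]
  field_simp

lemma groundKernel_one_mul_rpow_sub_one (hp : p ≠ 0) :
    groundKernel p r a 1 t * (t ^ a - 1) = groundDensity p r a t := by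
  unfold groundKernel groundDensity
  rw [one_rpow]
  rcases eq_or_ne (t ^ a - 1) 0 with h | h
  · simp [h, zero_rpow hp]
  · have hpow : |t ^ a - 1| ^ p = (t ^ a - 1) * (t ^ a - 1) * |t ^ a - 1| ^ (p - 2) := by
      rw [← abs_mul_abs_self, ← pow_two, ← rpow_natCast, ← rpow_add (abs_pos.2 h)]
      norm_num
    rw [hpow]
    ring

lemma inv_sq_mul_groundKernel_one_inv (hp : p ≠ 0) (hr : r = a * p + 2) (ht : 0 < t) :
    (t ^ 2)⁻¹ * groundKernel p r a 1 t⁻¹ = -(groundKernel p r a 1 t + groundDensity p r a t) := by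
  have hinv : groundKernel p r a 1 t⁻¹ = -(t ^ (a + 2) * groundKernel p r a 1 t) := by
    have hmul := groundKernel_mul_mul (p := p) (r := r) (a := a) (inv_pos.2 ht) ht.le zero_le_one
    have hexp : -(a * (p - 1) - r) = a + 2 := by rw [hr]; ring
    rwa [inv_mul_cancel₀ ht.ne', mul_one, inv_rpow ht.le, ← rpow_neg ht.le, hexp,
      groundKernel_swap p r a t, mul_neg] at hmul
  rw [hinv, ← groundKernel_one_mul_rpow_sub_one hp, rpow_add ht, rpow_two]
  field_simp
  ring

lemma abs_groundKernel_one_le (hp : p ≠ 0) (ha : a ≠ 0) (ht : t ∈ Ioo (0 : ℝ) 1) :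
    |groundKernel p r a 1 t| ≤ groundDensity p r a t / (min 1 |a| * (1 - t)) := by
  have hpos : 0 < min 1 |a| * (1 - t) :=
    mul_pos (lt_min one_pos (abs_pos.2 ha)) (sub_pos.2 ht.2)
  rw [le_div_iff₀ hpos]
  calc |groundKernel p r a 1 t| * (min 1 |a| * (1 - t))
      ≤ |groundKernel p r a 1 t| * |t ^ a - 1| := by
        gcongr
        exact min_one_abs_mul_one_sub_le_abs_rpow_sub_one ht
    _ = groundDensity p r a t := by
        rw [← abs_mul, groundKernel_one_mul_rpow_sub_one hp, abs_of_nonneg groundDensity_nonneg]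

lemma integrableOn_groundKernel_one (hp : 0 < p) (ha : a ≠ 0) (hap : -1 < a * p) (hrp : r < p + 1)
    {b : ℝ} (hb : b < 1) : IntegrableOn (groundKernel p r a 1) (Ioo 0 b) := by
  have hdom : IntegrableOn (fun t => groundDensity p r a t / (min 1 |a| * (1 - b))) (Ioo 0 b) :=
    ((integrableOn_groundDensity hp.le hap hrp).mono_set (Ioo_subset_Ioo_right hb.le)).div_const _
  refine hdom.mono' measurable_groundKernel.aestronglyMeasurable ?_
  filter_upwards [ae_restrict_mem measurableSet_Ioo] with t ht
  refine (abs_groundKernel_one_le hp.ne' ha ⟨ht.1, ht.2.trans hb⟩).trans ?_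
  have hmin : 0 < min 1 |a| := lt_min one_pos (abs_pos.2 ha)
  exact div_le_div_of_nonneg_left groundDensity_nonneg (mul_pos hmin (sub_pos.2 hb))
    (mul_le_mul_of_nonneg_left (sub_le_sub_left ht.2.le 1) hmin.le)

lemma abs_groundKernel_one_le_rpow (hp : 0 < p) (ha : a ≠ 0) (hap : -1 ≤ a * p)
    (ht : t ∈ Ico (1 / 2 : ℝ) 1) :
    |groundKernel p r a 1 t| ≤ max 1 |a| ^ p * 3 / min 1 |a| * (1 - t) ^ (p - r - 1) := by
  have ht0 : 0 < t := by linarith [ht.1]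
  have ht' : t ∈ Ioo (0 : ℝ) 1 := ⟨ht0, ht.2⟩
  have hsub : 0 < 1 - t := sub_pos.2 ht.2
  have hpow : 1 + t ^ (a * p) ≤ 3 := by
    have hle : t ^ (a * p) ≤ t ^ (-1 : ℝ) := rpow_le_rpow_of_exponent_ge ht0 ht.2.le hap
    have hinv : t⁻¹ ≤ 2 := inv_le_of_inv_le₀ two_pos (by linarith [ht.1])
    rw [rpow_neg_one] at hle
    linarith
  calc |groundKernel p r a 1 t|
      ≤ groundDensity p r a t / (min 1 |a| * (1 - t)) := abs_groundKernel_one_le hp.ne' ha ht'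
    _ ≤ max 1 |a| ^ p * (1 + t ^ (a * p)) * (1 - t) ^ (p - r) / (min 1 |a| * (1 - t)) := by
        gcongr
        exact groundDensity_le hp.le ht'
    _ ≤ max 1 |a| ^ p * 3 * (1 - t) ^ (p - r) / (min 1 |a| * (1 - t)) := by gcongr
    _ = max 1 |a| ^ p * 3 / min 1 |a| * (1 - t) ^ (p - r - 1) := by
        rw [rpow_sub_one hsub.ne', mul_div_mul_comm]

lemma tendsto_setIntegral_groundKernel_one (hp : 0 < p) (ha : a ≠ 0) (hap : -1 < a * p)
    (hr : r = a * p + 2) (hrp : r < p + 1) :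
    Tendsto (fun δ => ∫ t in {t : ℝ | 0 < t ∧ δ < |t - 1|}, groundKernel p r a 1 t) (𝓝[>] 0)
      (𝓝 (-∫ t in Ioo 0 1, groundDensity p r a t)) :=
  tendsto_setIntegral_lt_abs_sub_one (M := max 1 |a| ^ p * 3 / min 1 |a|) (q := p - r - 1)
    (by linarith) (fun _ => integrableOn_groundKernel_one hp ha hap hrp)
    (integrableOn_groundDensity hp.le hap hrp)
    (fun _ hu => inv_sq_mul_groundKernel_one_inv hp.ne' hr hu.1)
    (fun _ => abs_groundKernel_one_le_rpow hp ha hap.le)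

lemma setIntegral_groundKernel {x : ℝ} (hx : 0 < x) (ε : ℝ) :
    ∫ y in {y : ℝ | 0 < y ∧ ε < |y - x|}, groundKernel p r a x y
      = x ^ (a * (p - 1) - (r - 1))
        * ∫ t in {t : ℝ | 0 < t ∧ ε / x < |t - 1|}, groundKernel p r a 1 t := by
  have hmeas : MeasurableSet {t : ℝ | 0 < t ∧ ε / x < |t - 1|} :=
    (measurableSet_lt measurable_const measurable_id).inter
      (measurableSet_lt measurable_const (measurable_id.sub_const 1).abs)
  have hscale : EqOn (fun t => groundKernel p r a x (x * t))
      (fun t => x ^ (a * (p - 1) - r) * groundKernel p r a 1 t)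
      {t : ℝ | 0 < t ∧ ε / x < |t - 1|} := fun t ht => by
    simpa only [mul_one] using groundKernel_mul_mul hx zero_le_one ht.1.le
  have hexp : a * (p - 1) - (r - 1) = 1 + (a * (p - 1) - r) := by ring
  rw [setIntegral_lt_abs_sub_eq_mul _ hx, setIntegral_congr_fun hmeas hscale, integral_const_mul,
    hexp, rpow_add hx, rpow_one, mul_assoc]

lemma tendsto_setIntegral_groundKernel {x : ℝ} (hp : 0 < p) (ha : a ≠ 0) (hap : -1 < a * p)
    (hr : r = a * p + 2) (hrp : r < p + 1) (hx : 0 < x) :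
    Tendsto (fun ε => ∫ y in {y : ℝ | 0 < y ∧ ε < |y - x|}, groundKernel p r a x y) (𝓝[>] 0)
      (𝓝 (-(x ^ (a * (p - 1) - (r - 1)) * ∫ t in Ioo 0 1, groundDensity p r a t))) := by
  have hscale : Tendsto (fun ε : ℝ => ε / x) (𝓝[>] 0) (𝓝[>] 0) := by
    simpa only [id_eq, div_eq_mul_inv, zero_mul] using
      TendstoNhdsWithinIoi.mul_const (inv_pos.2 hx) (tendsto_id (α := ℝ) (x := 𝓝[>] 0))
  simp only [setIntegral_groundKernel hx, ← mul_neg]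
  exact ((tendsto_setIntegral_groundKernel_one hp ha hap hr hrp).comp hscale).const_mul _

end Ground

theorem ground_state_one_dim_limit_general
    (p s α xd : ℝ) (hp : 0 < p) (hs : s ∈ Set.Ioo (0 : ℝ) 1) (hps : p * s ≠ 1)
    (hα : α = (p * s - 1) / p) (hx : 0 < xd) :
    IntegrableOn (fun t : ℝ => |t ^ α - 1| ^ p / |t - 1| ^ (p * s + 1)) (Set.Ioo 0 1)
    ∧ (0 < ∫ t in Set.Ioo (0 : ℝ) 1, |t ^ α - 1| ^ p / |t - 1| ^ (p * s + 1))
    ∧ Tendsto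
        (fun ε : ℝ => ∫ yd in {y : ℝ | 0 < y ∧ ε < |y - xd|},
          (yd ^ α - xd ^ α) * |yd ^ α - xd ^ α| ^ (p - 2) / |yd - xd| ^ (p * s + 1))
        (nhdsWithin 0 (Set.Ioi 0))
        (nhds (-(xd ^ (α * (p - 1) - p * s)
          * ∫ t in Set.Ioo (0 : ℝ) 1, |t ^ α - 1| ^ p / |t - 1| ^ (p * s + 1)))) := by
  have hαp : α * p = p * s - 1 := by rw [hα, div_mul_cancel₀ _ hp.ne']
  have hα0 : α ≠ 0 := by rw [hα]; exact div_ne_zero (sub_ne_zero.2 hps) hp.ne'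
  have hap : -1 < α * p := by linarith [mul_pos hp hs.1]
  have hr : p * s + 1 = α * p + 2 := by linarith
  have hrp : p * s + 1 < p + 1 := by linarith [mul_lt_of_lt_one_right hp hs.2]
  have hlim := tendsto_setIntegral_groundKernel hp hα0 hap hr hrp hx
  rw [add_sub_cancel_right] at hlim
  exact ⟨integrableOn_groundDensity hp.le hap hrp, setIntegral_groundDensity_pos hp.le hα0 hap hrp,
    hlim⟩

/-- One-dimensional ground state computation: for w(x) = x_d^α with α = (ps-1)/p,
the principal value integral converges to -σ x_d^{α(p-1)-ps}, where
σ = ∫_0^1 |t^α-1|^p/|t-1|^{ps+1} dt is finite and positive. -/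
theorem ground_state_one_dim_limit
    (p s α xd : ℝ) (hp : 1 ≤ p) (hs : s ∈ Set.Ioo (0 : ℝ) 1) (hps : p * s ≠ 1)
    (hα : α = (p * s - 1) / p) (hx : 0 < xd) :
    IntegrableOn (fun t : ℝ => |t ^ α - 1| ^ p / |t - 1| ^ (p * s + 1)) (Set.Ioo 0 1)
    ∧ (0 < ∫ t in Set.Ioo (0 : ℝ) 1, |t ^ α - 1| ^ p / |t - 1| ^ (p * s + 1))
    ∧ Tendsto
        (fun ε : ℝ => ∫ yd in {y : ℝ | 0 < y ∧ ε < |y - xd|},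
          (yd ^ α - xd ^ α) * |yd ^ α - xd ^ α| ^ (p - 2) / |yd - xd| ^ (p * s + 1))
        (nhdsWithin 0 (Set.Ioi 0))
        (nhds (-(xd ^ (α * (p - 1) - p * s)
          * ∫ t in Set.Ioo (0 : ℝ) 1, |t ^ α - 1| ^ p / |t - 1| ^ (p * s + 1)))) :=
  ground_state_one_dim_limit_general p s α xd (zero_lt_one.trans_le hp) hs hps hα hx
end

section
/- Let d ≥ 1, p ∈ [1,∞), s ∈ (0,1) with ps ≠ 1. There exists κ(p,d,s) > 0 such that for every scalar function u ∈ C¹_c(ℝ^d_+): ∫_{ℝ^d_+} |u(x)|^p / x_d^{ps} dx ≤ κ(p,d,s) ∫_{ℝ^d_+}∫_{ℝ^d_+} |u(y) - u(x)|^p |y₁ - x₁|^p / (|y-x|^{d+ps} |y-x|^p) dy dx. -/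
open MeasureTheory Real

/-!
Fix `z` with `0 < 1 + f z`. The shear `x ↦ x + f x • z` preserves the half space `{f > 0}`, has
determinant `1 + f z`, and multiplies `f` by `1 + f z`. Hence composition with it multiplies the
norm of `u` in `L^p(f ^ (-p * s) dμ)` by `(1 + f z) ^ (s - 1 / p)`, and by the reverse triangle
inequality `|(1 + f z) ^ (s - 1 / p) - 1| ^ p * ∫ ‖u‖ ^ p f ^ (-p * s)` is at most
`∫ ‖u (x + f x • z) - u x‖ ^ p f x ^ (-p * s) dx`. Integrate this over `z` against a weight `w`
homogeneous of degree `-(d + p * s)`: substituting `y = x + f x • z`, the right-hand side becomes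
exactly the double integral of `‖u y - u x‖ ^ p * w (y - x)`, while the constant on the left is
positive because `p * s ≠ 1`.
-/

open Module (finrank)
open scoped ENNReal

namespace FractionalHardy

section ReverseTriangle

lemma ofReal_abs_sub_one_mul_le {c : ℝ} (hc : 0 ≤ c) {a b : ℝ≥0∞} (ha : a ≠ ∞)
    (h₁ : ENNReal.ofReal c * a ≤ a + b) (h₂ : a ≤ ENNReal.ofReal c * a + b) :
    ENNReal.ofReal |c - 1| * a ≤ b := by
  rcases le_total 1 c with h | h
  · rw [abs_of_nonneg (sub_nonneg.2 h), ENNReal.ofReal_sub _ zero_le_one, ENNReal.ofReal_one,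
      ENNReal.sub_mul fun _ _ => ha, one_mul]
    exact tsub_le_iff_left.2 h₁
  · rw [abs_sub_comm, abs_of_nonneg (sub_nonneg.2 h), ENNReal.ofReal_sub _ hc, ENNReal.ofReal_one,
      ENNReal.sub_mul fun _ _ => ha, one_mul]
    exact tsub_le_iff_left.2 h₂

lemma ofReal_abs_sub_one_mul_eLpNorm'_le {α F : Type*} [MeasurableSpace α] {μ : Measure α}
    [NormedAddCommGroup F] {p c : ℝ} (hp : 1 ≤ p) (hc : 0 ≤ c) {u v : α → F}
    (hu : AEStronglyMeasurable u μ) (hv : AEStronglyMeasurable v μ) (hfin : eLpNorm' u p μ ≠ ∞)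
    (huv : eLpNorm' v p μ = ENNReal.ofReal c * eLpNorm' u p μ) :
    ENNReal.ofReal |c - 1| * eLpNorm' u p μ ≤ eLpNorm' (v - u) p μ := by
  refine ofReal_abs_sub_one_mul_le hc hfin ?_ ?_
  · simpa [huv] using eLpNorm'_add_le hu (hv.sub hu) hp
  · rw [← huv, ← eLpNorm'_neg (v - u), neg_sub]
    simpa using eLpNorm'_add_le hv (hu.sub hv) hp

end ReverseTriangle

variable {E F : Type*} [NormedAddCommGroup E] [NormedSpace ℝ E] [NormedAddCommGroup F]

/-- The open half space `{f > 0}`, which is `ℝ^d_+` when `f` is the last coordinate. -/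
def halfSpace (f : StrongDual ℝ E) : Set E := {x | 0 < f x}

/-- The measure `f ^ (-a) dμ` on the half space `{f > 0}`. The left-hand side of the Hardy
inequality is the `p`-th power of the `L^p` norm of `u` for this measure with `a = p * s`. -/
noncomputable def hardyMeasure [MeasurableSpace E] (μ : Measure E) (f : StrongDual ℝ E) (a : ℝ) :
    Measure E :=
  (μ.restrict (halfSpace f)).withDensity fun x => ENNReal.ofReal (f x ^ (-a))

section HalfSpace

variable {f : StrongDual ℝ E} {x z : E}

lemma apply_add_apply_smul (f : StrongDual ℝ E) (x z : E) :
    f (x + f x • z) = (1 + f z) * f x := by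
  rw [map_add, map_smul, smul_eq_mul]
  ring

lemma add_apply_smul_mem_halfSpace_iff_left (hz : 0 < 1 + f z) :
    x + f x • z ∈ halfSpace f ↔ x ∈ halfSpace f := by
  rw [halfSpace, Set.mem_ofPred_eq, Set.mem_ofPred_eq, apply_add_apply_smul,
    mul_pos_iff_of_pos_left hz]

lemma add_apply_smul_mem_halfSpace_iff_right (hx : x ∈ halfSpace f) :
    x + f x • z ∈ halfSpace f ↔ 0 < 1 + f z := by
  rw [halfSpace, Set.mem_ofPred_eq, apply_add_apply_smul]
  exact mul_pos_iff_of_pos_right hx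

variable [MeasurableSpace E] [BorelSpace E]

lemma measurableSet_halfSpace (f : StrongDual ℝ E) : MeasurableSet (halfSpace f) :=
  measurableSet_lt measurable_const f.measurable

lemma lintegral_hardyMeasure (μ : Measure E) (f : StrongDual ℝ E) (a : ℝ) {φ : E → ℝ≥0∞}
    (hφ : Measurable φ) :
    ∫⁻ x, φ x ∂hardyMeasure μ f a =
      ∫⁻ x in halfSpace f, ENNReal.ofReal (f x ^ (-a)) * φ x ∂μ :=
  lintegral_withDensity_eq_lintegral_mul _ (by fun_prop) hφ

end HalfSpace

section ChangeOfVariables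

variable [MeasurableSpace E] [BorelSpace E] [FiniteDimensional ℝ E] (μ : Measure E)
  [μ.IsAddHaarMeasure] {f : StrongDual ℝ E}

lemma map_add_smul (x : E) {t : ℝ} (ht : t ≠ 0) :
    μ.map (fun z => x + t • z) = ENNReal.ofReal |(t ^ finrank ℝ E)⁻¹| • μ := by
  have hcomp : (fun z => x + t • z) = (x + ·) ∘ (t • ·) := rfl
  rw [hcomp, ← Measure.map_map (by fun_prop) (by fun_prop),
    Measure.map_addHaar_smul μ ht, Measure.map_smul, map_add_left_eq_self]

lemma map_add_apply_smul {z : E} (hz : 1 + f z ≠ 0) :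
    μ.map (fun x => x + f x • z) = ENNReal.ofReal |(1 + f z)⁻¹| • μ := by
  have hdet : LinearMap.det (LinearMap.transvection f.toLinearMap z) = 1 + f z :=
    LinearMap.transvection.det _ _
  rw [← hdet] at hz ⊢
  exact Measure.map_linearMap_addHaar_eq_smul_addHaar μ hz

lemma map_add_apply_smul_hardyMeasure (a : ℝ) {z : E} (hz : 0 < 1 + f z) :
    (hardyMeasure μ f a).map (fun x => x + f x • z) =
      ENNReal.ofReal ((1 + f z) ^ (a - 1)) • hardyMeasure μ f a := by
  refine Measure.ext_of_lintegral _ fun φ hφ => ?_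
  have hpre : (fun x => x + f x • z) ⁻¹' halfSpace f = halfSpace f :=
    Set.ext fun _ => add_apply_smul_mem_halfSpace_iff_left hz
  have hdensity : ∀ x ∈ halfSpace f, ENNReal.ofReal (f x ^ (-a)) =
      ENNReal.ofReal ((1 + f z) ^ a) * ENNReal.ofReal (f (x + f x • z) ^ (-a)) := by
    intro x (hx : 0 < f x)
    rw [← ENNReal.ofReal_mul (by positivity), apply_add_apply_smul, mul_rpow hz.le hx.le,
      ← mul_assoc, ← rpow_add hz, add_neg_cancel, rpow_zero, one_mul]
  calc ∫⁻ x, φ x ∂(hardyMeasure μ f a).map (fun x => x + f x • z)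
      = ∫⁻ x in halfSpace f, ENNReal.ofReal (f x ^ (-a)) * φ (x + f x • z) ∂μ := by
        rw [lintegral_map hφ (by fun_prop), lintegral_hardyMeasure _ _ _ (by fun_prop)]
    _ = ∫⁻ x in halfSpace f, ENNReal.ofReal ((1 + f z) ^ a) *
          (ENNReal.ofReal (f (x + f x • z) ^ (-a)) * φ (x + f x • z)) ∂μ :=
        setLIntegral_congr_fun (measurableSet_halfSpace f) fun x hx => by
          simp only [hdensity x hx, mul_assoc]
    _ = ENNReal.ofReal ((1 + f z) ^ a) *
          ∫⁻ x in halfSpace f, ENNReal.ofReal (f x ^ (-a)) * φ x ∂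
            μ.map (fun x => x + f x • z) := by
        rw [lintegral_const_mul' _ _ ENNReal.ofReal_ne_top,
          setLIntegral_map (measurableSet_halfSpace f) (by fun_prop) (by fun_prop), hpre]
    _ = ENNReal.ofReal ((1 + f z) ^ a) * (ENNReal.ofReal (1 + f z)⁻¹ *
          ∫⁻ x, φ x ∂hardyMeasure μ f a) := by
        rw [map_add_apply_smul μ hz.ne', abs_of_pos (inv_pos.2 hz), Measure.restrict_smul,
          lintegral_smul_measure, lintegral_hardyMeasure _ _ _ hφ, smul_eq_mul]
    _ = ∫⁻ x, φ x ∂ENNReal.ofReal ((1 + f z) ^ (a - 1)) • hardyMeasure μ f a := by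
        rw [lintegral_smul_measure, smul_eq_mul, ← mul_assoc, ← ENNReal.ofReal_mul (by positivity),
          rpow_sub_one hz.ne', div_eq_mul_inv]

lemma eLpNorm'_comp_add_apply_smul_hardyMeasure {p : ℝ} (hp : 0 < p) (s : ℝ) {u : E → F}
    (hu : StronglyMeasurable u) {z : E} (hz : 0 < 1 + f z) :
    eLpNorm' (fun x => u (x + f x • z)) p (hardyMeasure μ f (p * s)) =
      ENNReal.ofReal ((1 + f z) ^ (s - 1 / p)) * eLpNorm' u p (hardyMeasure μ f (p * s)) := by
  have hexp : (p * s - 1) * (1 / p) = s - 1 / p := by field_simp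
  calc eLpNorm' (fun x => u (x + f x • z)) p (hardyMeasure μ f (p * s))
      = eLpNorm' u p ((hardyMeasure μ f (p * s)).map fun x => x + f x • z) := by
        rw [eLpNorm'_eq_lintegral_enorm, eLpNorm'_eq_lintegral_enorm,
          lintegral_map (hu.enorm.pow_const p) (by fun_prop)]
    _ = ENNReal.ofReal ((1 + f z) ^ (s - 1 / p)) * eLpNorm' u p (hardyMeasure μ f (p * s)) := by
        rw [map_add_apply_smul_hardyMeasure μ _ hz, eLpNorm'_smul_measure hp.le,
          ENNReal.ofReal_rpow_of_pos (by positivity), ← rpow_mul hz.le, hexp]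

lemma ofReal_mul_lintegral_hardyMeasure_le {p : ℝ} (hp : 1 ≤ p) (s : ℝ) {u : E → F}
    (hu : StronglyMeasurable u) (hfin : ∫⁻ x, ‖u x‖ₑ ^ p ∂hardyMeasure μ f (p * s) ≠ ∞) {z : E}
    (hz : 0 < 1 + f z) :
    ENNReal.ofReal (|(1 + f z) ^ (s - 1 / p) - 1| ^ p) *
        ∫⁻ x, ‖u x‖ₑ ^ p ∂hardyMeasure μ f (p * s) ≤
      ∫⁻ x, ‖u (x + f x • z) - u x‖ₑ ^ p ∂hardyMeasure μ f (p * s) := by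
  have hp0 : 0 < p := by linarith
  have hnorm : eLpNorm' u p (hardyMeasure μ f (p * s)) ≠ ∞ := by
    rw [eLpNorm'_eq_lintegral_enorm]
    finiteness
  have hshear : StronglyMeasurable fun x => u (x + f x • z) := hu.comp_measurable (by fun_prop)
  have hle := ofReal_abs_sub_one_mul_eLpNorm'_le hp (by positivity) hu.aestronglyMeasurable
    hshear.aestronglyMeasurable hnorm (eLpNorm'_comp_add_apply_smul_hardyMeasure μ hp0 s hu hz)
  rw [lintegral_rpow_enorm_eq_rpow_eLpNorm' hp0, lintegral_rpow_enorm_eq_rpow_eLpNorm' hp0,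
    ← ENNReal.ofReal_rpow_of_nonneg (abs_nonneg _) hp0.le, ← ENNReal.mul_rpow_of_nonneg _ _ hp0.le]
  exact ENNReal.rpow_le_rpow hle hp0.le

end ChangeOfVariables

/-- The constant on the left of the Hardy inequality, that is, the reciprocal of `κ`: the integral
against `w` of the `p`-th power of the relative change of the norm of `L^p(f ^ (-p * s) dμ)` under
the shear `x ↦ x + f x • z`. It may be infinite. -/
noncomputable def hardyConstant [MeasurableSpace E] (μ : Measure E) (f : StrongDual ℝ E)
    (w : E → ℝ≥0∞) (p s : ℝ) : ℝ≥0∞ :=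
  ∫⁻ z in {z | 0 < 1 + f z}, w z * ENNReal.ofReal (|(1 + f z) ^ (s - 1 / p) - 1| ^ p) ∂μ

section Homogeneous

variable [MeasurableSpace E] [BorelSpace E] [FiniteDimensional ℝ E] (μ : Measure E)
  [μ.IsAddHaarMeasure] {f : StrongDual ℝ E} {w : E → ℝ≥0∞} {p s : ℝ}

lemma measurable_enorm_comp_sub_rpow_mul (f : StrongDual ℝ E) (hw : Measurable w) (p : ℝ)
    {u : E → F} (hu : StronglyMeasurable u) :
    Measurable fun q : E × E => ‖u (q.1 + f q.1 • q.2) - u q.1‖ₑ ^ p * w q.2 := by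
  have hshear : StronglyMeasurable fun q : E × E => u (q.1 + f q.1 • q.2) :=
    hu.comp_measurable (by fun_prop)
  have := (hshear.sub (hu.comp_measurable measurable_fst)).enorm
  exact (this.pow_const p).mul (hw.comp measurable_snd)

lemma setLIntegral_halfSpace_eq_ofReal_mul (hw : Measurable w)
    (hwh : ∀ t : ℝ, 0 < t → ∀ z, w (t • z) = ENNReal.ofReal (t ^ (-(finrank ℝ E + p * s))) * w z)
    {u : E → F} (hu : StronglyMeasurable u) {x : E} (hx : x ∈ halfSpace f) :
    ∫⁻ y in halfSpace f, ‖u y - u x‖ₑ ^ p * w (y - x) ∂μ = ENNReal.ofReal (f x ^ (-(p * s))) *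
      ∫⁻ z in {z | 0 < 1 + f z}, ‖u (x + f x • z) - u x‖ₑ ^ p * w z ∂μ := by
  have hx' : 0 < f x := hx
  have hmap : μ = ENNReal.ofReal (f x ^ finrank ℝ E) • μ.map (fun z => x + f x • z) := by
    rw [map_add_smul μ x hx'.ne', smul_smul, ← ENNReal.ofReal_mul (by positivity),
      abs_of_pos (by positivity), mul_inv_cancel₀ (by positivity), ENNReal.ofReal_one, one_smul]
  have hpre : (fun z => x + f x • z) ⁻¹' halfSpace f = {z | 0 < 1 + f z} :=
    Set.ext fun _ => add_apply_smul_mem_halfSpace_iff_right hx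
  have hmeas : Measurable fun y => ‖u y - u x‖ₑ ^ p * w (y - x) :=
    ((hu.sub stronglyMeasurable_const).enorm.pow_const p).mul (by fun_prop)
  have hexp : f x ^ finrank ℝ E * f x ^ (-(finrank ℝ E + p * s)) = f x ^ (-(p * s)) := by
    rw [← rpow_natCast, ← rpow_add hx']
    ring_nf
  conv_lhs => rw [hmap, Measure.restrict_smul, lintegral_smul_measure,
    setLIntegral_map (measurableSet_halfSpace f) hmeas (by fun_prop), hpre]
  simp_rw [add_sub_cancel_left, hwh _ hx', mul_left_comm _ (ENNReal.ofReal _)]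
  rw [lintegral_const_mul' _ _ ENNReal.ofReal_ne_top, smul_eq_mul, ← mul_assoc,
    ← ENNReal.ofReal_mul (by positivity), hexp]

theorem hardyConstant_mul_lintegral_le (hp : 1 ≤ p) (hw : Measurable w)
    (hwh : ∀ t : ℝ, 0 < t → ∀ z, w (t • z) = ENNReal.ofReal (t ^ (-(finrank ℝ E + p * s))) * w z)
    {u : E → F} (hu : StronglyMeasurable u)
    (hfin : ∫⁻ x, ‖u x‖ₑ ^ p ∂hardyMeasure μ f (p * s) ≠ ∞) :
    hardyConstant μ f w p s * ∫⁻ x, ‖u x‖ₑ ^ p ∂hardyMeasure μ f (p * s) ≤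
      ∫⁻ x in halfSpace f, ∫⁻ y in halfSpace f, ‖u y - u x‖ₑ ^ p * w (y - x) ∂μ ∂μ := by
  set ν := hardyMeasure μ f (p * s) with hν
  have : SFinite ν := by rw [hν, hardyMeasure]; infer_instance
  have hmeas := measurable_enorm_comp_sub_rpow_mul f hw p hu
  have hdiff (z : E) : Measurable fun x => ‖u (x + f x • z) - u x‖ₑ ^ p :=
    ((hu.comp_measurable (g := fun x => x + f x • z) (by fun_prop)).sub hu).enorm.pow_const p
  calc hardyConstant μ f w p s * ∫⁻ x, ‖u x‖ₑ ^ p ∂ν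
      = ∫⁻ z in {z | 0 < 1 + f z}, w z * (ENNReal.ofReal (|(1 + f z) ^ (s - 1 / p) - 1| ^ p) *
          ∫⁻ x, ‖u x‖ₑ ^ p ∂ν) ∂μ := by
        simp_rw [← mul_assoc]
        exact (lintegral_mul_const' _ _ hfin).symm
    _ ≤ ∫⁻ z in {z | 0 < 1 + f z}, ∫⁻ x, ‖u (x + f x • z) - u x‖ₑ ^ p * w z ∂ν ∂μ := by
        refine setLIntegral_mono' (measurableSet_lt measurable_const (by fun_prop)) fun z hz => ?_
        rw [lintegral_mul_const _ (hdiff z), mul_comm]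
        gcongr
        exact ofReal_mul_lintegral_hardyMeasure_le μ hp s hu hfin hz
    _ = ∫⁻ x, ∫⁻ z in {z | 0 < 1 + f z}, ‖u (x + f x • z) - u x‖ₑ ^ p * w z ∂μ ∂ν :=
        lintegral_lintegral_swap (hmeas.comp measurable_swap).aemeasurable
    _ = ∫⁻ x in halfSpace f, ENNReal.ofReal (f x ^ (-(p * s))) *
          ∫⁻ z in {z | 0 < 1 + f z}, ‖u (x + f x • z) - u x‖ₑ ^ p * w z ∂μ ∂μ :=
        lintegral_hardyMeasure μ f _ hmeas.lintegral_prod_right'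
    _ = ∫⁻ x in halfSpace f, ∫⁻ y in halfSpace f, ‖u y - u x‖ₑ ^ p * w (y - x) ∂μ ∂μ :=
        setLIntegral_congr_fun (measurableSet_halfSpace f) fun x hx =>
          (setLIntegral_halfSpace_eq_ofReal_mul μ hw hwh hu hx).symm

end Homogeneous

section DirectionalWeight

/-- The kernel by which `g` sees the increment `z = y - x` in the Gagliardo seminorm; with `g` the
first coordinate it is the kernel `|y₁ - x₁| ^ p / |y - x| ^ (d + p * s + p)` of the theorem. -/
noncomputable def directionalWeight (g : StrongDual ℝ E) (p s : ℝ) (z : E) : ℝ :=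
  |g z| ^ p / ‖z‖ ^ (finrank ℝ E + p * s + p)

variable {g : StrongDual ℝ E} {p s : ℝ}

lemma directionalWeight_nonneg (g : StrongDual ℝ E) (p s : ℝ) (z : E) :
    0 ≤ directionalWeight g p s z := by
  unfold directionalWeight
  positivity

lemma directionalWeight_ne_zero {z : E} (hz : g z ≠ 0) : directionalWeight g p s z ≠ 0 := by
  have : z ≠ 0 := fun h => hz (by simp [h])
  unfold directionalWeight
  positivity

lemma directionalWeight_smul (g : StrongDual ℝ E) (p s : ℝ) {t : ℝ} (ht : 0 < t) (z : E) :
    directionalWeight g p s (t • z) =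
      t ^ (-(finrank ℝ E + p * s)) * directionalWeight g p s z := by
  have hexp : t ^ p / t ^ (finrank ℝ E + p * s + p) = t ^ (-(finrank ℝ E + p * s)) := by
    rw [← rpow_sub ht]
    ring_nf
  rw [directionalWeight, directionalWeight, map_smul, smul_eq_mul, abs_mul, abs_of_pos ht,
    norm_smul, norm_of_nonneg ht.le, mul_rpow ht.le (abs_nonneg _), mul_rpow ht.le (norm_nonneg _),
    mul_div_mul_comm, hexp]

lemma ofReal_directionalWeight_smul (g : StrongDual ℝ E) (p s : ℝ) {t : ℝ} (ht : 0 < t) (z : E) :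
    ENNReal.ofReal (directionalWeight g p s (t • z)) =
      ENNReal.ofReal (t ^ (-(finrank ℝ E + p * s))) *
        ENNReal.ofReal (directionalWeight g p s z) := by
  rw [directionalWeight_smul g p s ht, ENNReal.ofReal_mul (rpow_nonneg ht.le _)]

lemma directionalWeight_le (g : StrongDual ℝ E) (hp : 0 < p) (s : ℝ) (z : E) :
    directionalWeight g p s z ≤ ‖g‖ ^ p / ‖z‖ ^ (finrank ℝ E + p * s) := by
  rcases eq_or_ne z 0 with rfl | hz
  · simp only [directionalWeight, map_zero, abs_zero, zero_rpow hp.ne', zero_div]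
    positivity
  · have hz' : 0 < ‖z‖ := norm_pos_iff.2 hz
    calc directionalWeight g p s z
        ≤ (‖g‖ * ‖z‖) ^ p / ‖z‖ ^ (finrank ℝ E + p * s + p) := by
          unfold directionalWeight
          gcongr
          exact g.le_opNorm z
      _ = ‖g‖ ^ p / ‖z‖ ^ (finrank ℝ E + p * s) := by
          rw [mul_rpow (by positivity) hz'.le, rpow_add hz' _ p,
            mul_div_mul_right _ _ (by positivity)]

lemma measurable_directionalWeight [MeasurableSpace E] [BorelSpace E] (g : StrongDual ℝ E)
    (p s : ℝ) : Measurable (directionalWeight g p s) := by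
  unfold directionalWeight
  fun_prop

end DirectionalWeight

section Positivity

variable [MeasurableSpace E] [BorelSpace E] [FiniteDimensional ℝ E] (μ : Measure E)
  [μ.IsAddHaarMeasure]

lemma ae_apply_ne_zero {f : StrongDual ℝ E} (hf : f ≠ 0) : ∀ᵐ z ∂μ, f z ≠ 0 := by
  have hker : f.toLinearMap.ker ≠ ⊤ := fun h =>
    hf (ContinuousLinearMap.coe_injective (LinearMap.ker_eq_top.1 h))
  exact measure_eq_zero_iff_ae_notMem.1 (Measure.addHaar_submodule μ _ hker)

lemma ae_ofReal_directionalWeight_ne_zero {g : StrongDual ℝ E} (hg : g ≠ 0) (p s : ℝ) :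
    ∀ᵐ z ∂μ, ENNReal.ofReal (directionalWeight g p s z) ≠ 0 := by
  filter_upwards [ae_apply_ne_zero μ hg] with z hz
  have hpos := (directionalWeight_nonneg g p s z).lt_of_ne' (directionalWeight_ne_zero hz)
  exact (ENNReal.ofReal_pos.2 hpos).ne'

lemma hardyConstant_pos {f : StrongDual ℝ E} (hf : f ≠ 0) {w : E → ℝ≥0∞} (hw : Measurable w)
    (hw0 : ∀ᵐ z ∂μ, w z ≠ 0) {p s : ℝ} (hp : 0 < p) (hps : p * s ≠ 1) :
    0 < hardyConstant μ f w p s := by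
  have hexp : s - 1 / p ≠ 0 := fun h => hps (by field_simp at h; linarith)
  have hopen : IsOpen {z | 0 < 1 + f z} := isOpen_lt (by fun_prop) (by fun_prop)
  refine (setLIntegral_pos_iff (by fun_prop)).2
    ((hopen.measure_pos μ ⟨0, by simp⟩).trans_le (measure_mono_ae ?_))
  filter_upwards [hw0, ae_apply_ne_zero μ hf] with z hwz hfz (hz : 0 < 1 + f z)
  have hne : (1 + f z) ^ (s - 1 / p) ≠ 1 := fun h =>
    hfz (by simpa using (rpow_left_inj hz.le zero_le_one hexp).1 (h.trans (one_rpow _).symm))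
  have hpos : 0 < |(1 + f z) ^ (s - 1 / p) - 1| ^ p :=
    rpow_pos_of_pos (abs_pos.2 (sub_ne_zero.2 hne)) p
  exact ⟨mul_ne_zero hwz (ENNReal.ofReal_pos.2 hpos).ne', hz⟩

end Positivity

section Bochner

lemma ofReal_setIntegral_eq_lintegral_hardyMeasure [MeasurableSpace E] [BorelSpace E]
    (μ : Measure E) {f : StrongDual ℝ E} {p : ℝ} (hp : 0 ≤ p) {a : ℝ} {u : E → F}
    (hu : StronglyMeasurable u)
    (hint : IntegrableOn (fun x => ‖u x‖ ^ p / f x ^ a) (halfSpace f) μ) :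
    ENNReal.ofReal (∫ x in halfSpace f, ‖u x‖ ^ p / f x ^ a ∂μ) =
      ∫⁻ x, ‖u x‖ₑ ^ p ∂hardyMeasure μ f a := by
  have hnonneg : ∀ x ∈ halfSpace f, 0 ≤ ‖u x‖ ^ p / f x ^ a := fun x (hx : 0 < f x) => by
    positivity
  rw [ofReal_integral_eq_lintegral_ofReal hint
      (ae_restrict_of_forall_mem (measurableSet_halfSpace f) hnonneg),
    lintegral_hardyMeasure μ f a (hu.enorm.pow_const p)]
  refine setLIntegral_congr_fun (measurableSet_halfSpace f) fun x (hx : 0 < f x) => ?_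
  rw [div_eq_mul_inv, ← rpow_neg hx.le, mul_comm, ENNReal.ofReal_mul (by positivity),
    ← ENNReal.ofReal_rpow_of_nonneg (norm_nonneg _) hp, ofReal_norm]

lemma ofReal_setIntegral_setIntegral_eq {G : Type*} [AddGroup G] [MeasurableSpace G]
    (μ : Measure G) [SFinite μ] {p : ℝ} (hp : 0 ≤ p) {w : G → ℝ} (hw : ∀ z, 0 ≤ w z) {u : G → F}
    {S : Set G}
    (hint : IntegrableOn (fun q : G × G => ‖u q.2 - u q.1‖ ^ p * w (q.2 - q.1)) (S ×ˢ S)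
      (μ.prod μ)) :
    ENNReal.ofReal (∫ x in S, ∫ y in S, ‖u y - u x‖ ^ p * w (y - x) ∂μ ∂μ) =
      ∫⁻ x in S, ∫⁻ y in S, ‖u y - u x‖ₑ ^ p * ENNReal.ofReal (w (y - x)) ∂μ ∂μ := by
  rw [IntegrableOn, ← Measure.prod_restrict] at hint
  rw [← integral_prod _ hint, ofReal_integral_eq_lintegral_ofReal hint
      (ae_of_all _ fun q => mul_nonneg (by positivity) (hw _)),
    lintegral_prod _ hint.aemeasurable.ennreal_ofReal]
  simp_rw [ENNReal.ofReal_mul (rpow_nonneg (norm_nonneg _) p),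
    ← ENNReal.ofReal_rpow_of_nonneg (norm_nonneg _) hp, ofReal_norm]

end Bochner

section Integrability

lemma integrableOn_norm_rpow_div_rpow [MeasurableSpace E] [BorelSpace E] (μ : Measure E)
    [IsFiniteMeasureOnCompacts μ] {u : E → F} {f : StrongDual ℝ E} {p : ℝ} (hp : 0 < p) (a : ℝ)
    (hu : Continuous u) (hc : HasCompactSupport u) (hsupp : tsupport u ⊆ halfSpace f) :
    IntegrableOn (fun x => ‖u x‖ ^ p / f x ^ a) (halfSpace f) μ := by
  have hpos : ∀ x ∈ tsupport u, 0 < f x := hsupp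
  have hcont : ContinuousOn (fun x => ‖u x‖ ^ p / f x ^ a) (tsupport u) :=
    (hu.norm.continuousOn.rpow_const fun _ _ => Or.inr hp.le).div
      (f.continuous.continuousOn.rpow_const fun x hx => Or.inl (hpos x hx).ne')
      fun x hx => (rpow_pos_of_pos (hpos x hx) a).ne'
  refine (hcont.integrableOn_compact hc).of_forall_sdiff_eq_zero (measurableSet_halfSpace f)
    fun x hx => ?_
  rw [image_eq_zero_of_notMem_tsupport hx.2, norm_zero, zero_rpow hp.ne', zero_div]

lemma integrable_min_norm_one_rpow_div_norm_rpow [MeasurableSpace E] [BorelSpace E]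
    [FiniteDimensional ℝ E] [Nontrivial E] (μ : Measure E) [μ.IsAddHaarMeasure] {a b : ℝ}
    (hb : 0 < b) (hba : b < a) :
    Integrable (fun h : E => min ‖h‖ 1 ^ a / ‖h‖ ^ (finrank ℝ E + b)) μ := by
  have hpow : ∀ {r : ℝ}, 0 < r → ∀ c, r ^ (finrank ℝ E - 1) * (r ^ c / r ^ (finrank ℝ E + b)) =
      r ^ (c - b - 1) := by
    intro r hr c
    rw [← rpow_sub hr, ← rpow_natCast, ← rpow_add hr, Nat.cast_sub Module.finrank_pos]
    push_cast
    ring_nf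
  rw [integrable_fun_norm_addHaar μ (f := fun r => min r 1 ^ a / r ^ (finrank ℝ E + b)),
    ← Set.Ioc_union_Ioi_eq_Ioi zero_le_one, integrableOn_union]
  constructor
  · have hsmall : IntegrableOn (fun r : ℝ => r ^ (a - b - 1)) (Set.Ioc 0 1) :=
      (intervalIntegrable_iff_integrableOn_Ioc_of_le zero_le_one).1
        (intervalIntegral.intervalIntegrable_rpow' (by linarith))
    refine hsmall.congr_fun (fun r hr => ?_) measurableSet_Ioc
    simp only [smul_eq_mul, min_eq_left hr.2, hpow hr.1]
  · have hlarge : IntegrableOn (fun r : ℝ => r ^ (0 - b - 1)) (Set.Ioi 1) :=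
      integrableOn_Ioi_rpow_of_lt (by linarith) one_pos
    refine hlarge.congr_fun (fun r (hr : 1 < r) => ?_) measurableSet_Ioi
    simp only [smul_eq_mul, min_eq_right hr.le, one_rpow, ← hpow (one_pos.trans hr) 0, rpow_zero]

lemma integrable_prod_of_norm_le_comp_sub {X : Type*} [AddCommGroup X] [MeasurableSpace X]
    [MeasurableAdd₂ X] [MeasurableNeg X] (μ : Measure X) [SFinite μ] [μ.IsAddLeftInvariant]
    [μ.IsNegInvariant] {k : X × X → ℝ} {S : Set X} {G : X → ℝ}
    (hk : AEStronglyMeasurable k (μ.prod μ)) (hSm : MeasurableSet S) (hS : μ S ≠ ∞)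
    (hG : Integrable G μ) (hkG : ∀ x y, ‖k (x, y)‖ ≤ G (y - x))
    (hkS : ∀ x ∉ S, ∀ y ∉ S, k (x, y) = 0) :
    Integrable k (μ.prod μ) := by
  set T : X → ℝ := S.indicator 1 with hT
  have hTint : Integrable T μ := (integrable_indicator_iff hSm).2 (integrableOn_const hS)
  have hleft : Integrable (fun q : X × X => T q.1 * G (q.2 - q.1)) (μ.prod μ) :=
    (hTint.convolution_integrand (ContinuousLinearMap.mul ℝ ℝ) hG).swap
  have hright : Integrable (fun q : X × X => T q.2 * G (-(q.1 - q.2))) (μ.prod μ) :=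
    hTint.convolution_integrand (ContinuousLinearMap.mul ℝ ℝ) hG.comp_neg
  refine (hleft.add hright).mono' hk (ae_of_all _ fun ⟨x, y⟩ => ?_)
  have hG0 : 0 ≤ G (y - x) := (norm_nonneg _).trans (hkG x y)
  by_cases hx : x ∈ S <;> by_cases hy : y ∈ S
  · simpa [hT, hx, hy] using (hkG x y).trans (le_add_of_nonneg_left hG0)
  · simpa [hT, hx, hy] using hkG x y
  · simpa [hT, hx, hy] using hkG x y
  · simpa [hT, hx, hy] using hkS x hx y hy

lemma exists_norm_sub_le_mul_min_norm_one {X : Type*} [SeminormedAddCommGroup X] {u : X → F}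
    {L : NNReal} (hL : LipschitzWith L u) (hc : HasCompactSupport u) :
    ∃ C : ℝ, 0 ≤ C ∧ ∀ x y, ‖u y - u x‖ ≤ C * min ‖y - x‖ 1 := by
  obtain ⟨M, hM⟩ := hc.exists_bound_of_continuous hL.continuous
  have hC : 0 ≤ max (L : ℝ) (2 * M) := le_max_of_le_left L.coe_nonneg
  refine ⟨max L (2 * M), hC, fun x y => ?_⟩
  rw [mul_min_of_nonneg _ _ hC, mul_one]
  refine le_min ((hL.norm_sub_le y x).trans ?_) ?_
  · gcongr
    exact le_max_left _ _
  · exact (norm_sub_le _ _).trans (le_max_of_le_right (by linarith [hM x, hM y]))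

lemma integrable_norm_sub_rpow_mul_directionalWeight [MeasurableSpace E] [BorelSpace E]
    [FiniteDimensional ℝ E] [Nontrivial E] (μ : Measure E) [μ.IsAddHaarMeasure] {u : E → F}
    (g : StrongDual ℝ E) {p s : ℝ} (hp : 0 < p) (hs : s ∈ Set.Ioo 0 1) {L : NNReal}
    (hL : LipschitzWith L u) (hc : HasCompactSupport u) :
    Integrable (fun q : E × E => ‖u q.2 - u q.1‖ ^ p * directionalWeight g p s (q.2 - q.1))
      (μ.prod μ) := by
  obtain ⟨C, hC, hu⟩ := exists_norm_sub_le_mul_min_norm_one hL hc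
  have hmeas : Measurable fun q : E × E =>
      ‖u q.2 - u q.1‖ ^ p * directionalWeight g p s (q.2 - q.1) := by
    have hcont := hL.continuous
    have hdiff : Continuous fun q : E × E => ‖u q.2 - u q.1‖ := by fun_prop
    exact (hdiff.measurable.pow_const p).mul
      ((measurable_directionalWeight g p s).comp (by fun_prop))
  have hdom : Integrable (fun h : E => C ^ p * ‖g‖ ^ p *
      (min ‖h‖ 1 ^ p / ‖h‖ ^ (finrank ℝ E + p * s))) μ :=
    (integrable_min_norm_one_rpow_div_norm_rpow μ (mul_pos hp hs.1)
      (mul_lt_of_lt_one_right hp hs.2)).const_mul _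
  refine integrable_prod_of_norm_le_comp_sub μ hmeas.aestronglyMeasurable
    (isClosed_tsupport u).measurableSet hc.isCompact.measure_lt_top.ne hdom (fun x y => ?_)
    fun x hx y hy => ?_
  · have hw := directionalWeight_nonneg g p s (y - x)
    calc ‖‖u y - u x‖ ^ p * directionalWeight g p s (y - x)‖
        = ‖u y - u x‖ ^ p * directionalWeight g p s (y - x) := norm_of_nonneg (by positivity)
      _ ≤ (C * min ‖y - x‖ 1) ^ p * (‖g‖ ^ p / ‖y - x‖ ^ (finrank ℝ E + p * s)) := by
          gcongr
          · exact hu x y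
          · exact directionalWeight_le g hp s _
      _ = _ := by rw [mul_rpow hC (by positivity)]; ring
  · simp [image_eq_zero_of_notMem_tsupport hx, image_eq_zero_of_notMem_tsupport hy,
      zero_rpow hp.ne']

end Integrability

lemma euclideanSpace_proj_ne_zero {ι : Type*} (i : ι) :
    (EuclideanSpace.proj i : StrongDual ℝ (EuclideanSpace ℝ ι)) ≠ 0 := fun h => by
  classical
  simpa using DFunLike.congr_fun h (EuclideanSpace.single i 1)

end FractionalHardy

open FractionalHardy

theorem scalar_hardy_weighted_general {E F : Type*} [NormedAddCommGroup E] [NormedSpace ℝ E]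
    [FiniteDimensional ℝ E] [MeasurableSpace E] [BorelSpace E] [NormedAddCommGroup F]
    (μ : Measure E) [μ.IsAddHaarMeasure] {f g : StrongDual ℝ E} (hf : f ≠ 0) (hg : g ≠ 0)
    {p s : ℝ} (hp : 1 ≤ p) (hps : p * s ≠ 1) :
    ∃ κ : ℝ, 0 < κ ∧ ∀ u : E → F, StronglyMeasurable u →
      IntegrableOn (fun x => ‖u x‖ ^ p / f x ^ (p * s)) (halfSpace f) μ →
      IntegrableOn (fun q : E × E => ‖u q.2 - u q.1‖ ^ p * directionalWeight g p s (q.2 - q.1))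
        (halfSpace f ×ˢ halfSpace f) (μ.prod μ) →
      ∫ x in halfSpace f, ‖u x‖ ^ p / f x ^ (p * s) ∂μ ≤
        κ * ∫ x in halfSpace f, ∫ y in halfSpace f,
          ‖u y - u x‖ ^ p * directionalWeight g p s (y - x) ∂μ ∂μ := by
  have hp0 : 0 < p := by linarith
  have hw_nonneg := directionalWeight_nonneg g p s
  have hw_meas := (measurable_directionalWeight g p s).ennreal_ofReal
  obtain ⟨c, -, hc, hcw⟩ := ENNReal.lt_iff_exists_real_btwn.1
    (hardyConstant_pos μ hf hw_meas (ae_ofReal_directionalWeight_ne_zero μ hg p s) hp0 hps)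
  rw [ENNReal.ofReal_pos] at hc
  refine ⟨c⁻¹, inv_pos.2 hc, fun u hu hK hI => ?_⟩
  have hK_eq := ofReal_setIntegral_eq_lintegral_hardyMeasure μ hp0.le hu hK
  have hI_eq := ofReal_setIntegral_setIntegral_eq μ hp0.le hw_nonneg hI
  rw [inv_mul_eq_div, le_div_iff₀' hc, ← ENNReal.ofReal_le_ofReal_iff (integral_nonneg fun x =>
      integral_nonneg fun y => mul_nonneg (by positivity) (hw_nonneg _)),
    ENNReal.ofReal_mul hc.le, hK_eq, hI_eq]
  exact (mul_le_mul_left hcw.le _).trans (hardyConstant_mul_lintegral_le μ hp hw_meas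
    (fun t ht => ofReal_directionalWeight_smul g p s ht) hu (hK_eq ▸ ENNReal.ofReal_ne_top))

/-- Scalar fractional Hardy-type inequality with the weight |y₁-x₁|^p/|y-x|^p:
∫ |u(x)|^p/x_d^{ps} dx ≤ κ ∫∫ |u(y)-u(x)|^p |y₁-x₁|^p / |y-x|^{d+ps+p} dy dx. -/
theorem scalar_hardy_weighted
    (d : ℕ) (hd : 1 ≤ d) (p s : ℝ) (hp : 1 ≤ p) (hs : s ∈ Set.Ioo (0 : ℝ) 1)
    (hps : p * s ≠ 1) :
    ∃ κ : ℝ, 0 < κ ∧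
      ∀ u : EuclideanSpace ℝ (Fin d) → ℝ,
        ContDiff ℝ 1 u → HasCompactSupport u →
        tsupport u ⊆ {x : EuclideanSpace ℝ (Fin d) | 0 < x ⟨d - 1, by omega⟩} →
        (∫ x in {x : EuclideanSpace ℝ (Fin d) | 0 < x ⟨d - 1, by omega⟩},
            |u x| ^ p / (x ⟨d - 1, by omega⟩) ^ (p * s)) ≤
          κ * ∫ x in {x : EuclideanSpace ℝ (Fin d) | 0 < x ⟨d - 1, by omega⟩},
              ∫ y in {y : EuclideanSpace ℝ (Fin d) | 0 < y ⟨d - 1, by omega⟩},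
                |u y - u x| ^ p * |y ⟨0, by omega⟩ - x ⟨0, by omega⟩| ^ p
                  / ‖y - x‖ ^ ((d : ℝ) + p * s + p) := by
  have hp0 : 0 < p := by linarith
  have : Nonempty (Fin d) := ⟨⟨0, hd⟩⟩
  obtain ⟨κ, hκ, h⟩ := scalar_hardy_weighted_general (F := ℝ)
    (volume : Measure (EuclideanSpace ℝ (Fin d))) (euclideanSpace_proj_ne_zero ⟨d - 1, by omega⟩)
    (euclideanSpace_proj_ne_zero ⟨0, by omega⟩) hp hps
  refine ⟨κ, hκ, fun u hu hc hsupp => ?_⟩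
  obtain ⟨L, hL⟩ := hu.lipschitzWith_of_hasCompactSupport hc one_ne_zero
  simpa [directionalWeight, mul_div_assoc, halfSpace] using
    h u hu.continuous.stronglyMeasurable
      (integrableOn_norm_rpow_div_rpow volume hp0 (p * s) hu.continuous hc hsupp)
      (integrable_norm_sub_rpow_mul_directionalWeight volume _ hp0 hs hL hc).integrableOn
end
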